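/- Asymptotically almost all λυ-terms are in lazy substitution form: the proportion of λυ-terms of size n that are strict substitution forms (reachable from some a[b/] with a, b pure via a sequence of υ-rewriting steps with no (Beta) step) tends to 0 as n → ∞. -/

import Mathlib

open Finset Filter

mutual
inductive Tm : Type
  | idx : Nat → Tm
  | lam : Tm → Tm
  | app : Tm → Tm → Tm
  | clos : Tm → Subst → Tm
inductive Subst : Type
  | slash : Tm → Subst
  | lift : Subst → Subst
  | shift : Subst
end

mutual
/-- Natural size of a λυ-term: every constructor weighs 1; index n has size n+1. -/
def Tm.size : Tm → Nat
  | .idx n => n + 1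
  | .lam a => Tm.size a + 1
  | .app a b => Tm.size a + Tm.size b + 1
  | .clos a s => Tm.size a + Subst.size s + 1
/-- Natural size of an explicit substitution. -/
def Subst.size : Subst → Nat
  | .slash a => Tm.size a + 1
  | .lift s => Subst.size s + 1
  | .shift => 1
end

/-- Number of λυ-terms of size `n`. -/
noncomputable def tcount (n : ℕ) : ℕ := Nat.card {a : Tm // Tm.size a = n}

/-- Number of explicit substitutions of size `n`. -/
noncomputable def scount (n : ℕ) : ℕ := Nat.card {s : Subst // Subst.size s = n}

/-- A λυ-term is impure if it contains a closure constructor. -/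
def Tm.impure : Tm → Bool
  | .idx _ => false
  | .lam a => Tm.impure a
  | .app a b => Tm.impure a || Tm.impure b
  | .clos _ _ => true

mutual
/-- One υ-rewriting step on terms (the seven rules except (Beta)), closed under contexts. -/
inductive TStep : Tm → Tm → Prop
  | appRule (a b : Tm) (s : Subst) :
      TStep (.clos (.app a b) s) (.app (.clos a s) (.clos b s))
  | lamRule (a : Tm) (s : Subst) :
      TStep (.clos (.lam a) s) (.lam (.clos a (.lift s)))
  | fvar (a : Tm) : TStep (.clos (.idx 0) (.slash a)) a
  | rvar (n : ℕ) (a : Tm) : TStep (.clos (.idx (n + 1)) (.slash a)) (.idx n)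
  | fvarLift (s : Subst) : TStep (.clos (.idx 0) (.lift s)) (.idx 0)
  | rvarLift (n : ℕ) (s : Subst) :
      TStep (.clos (.idx (n + 1)) (.lift s)) (.clos (.clos (.idx n) s) .shift)
  | varShift (n : ℕ) : TStep (.clos (.idx n) .shift) (.idx (n + 1))
  | lamCong {a a' : Tm} : TStep a a' → TStep (.lam a) (.lam a')
  | appLeft {a a' : Tm} (b : Tm) : TStep a a' → TStep (.app a b) (.app a' b)
  | appRight (a : Tm) {b b' : Tm} : TStep b b' → TStep (.app a b) (.app a b')
  | closLeft {a a' : Tm} (s : Subst) : TStep a a' → TStep (.clos a s) (.clos a' s)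
  | closRight (a : Tm) {s s' : Subst} : SStep s s' → TStep (.clos a s) (.clos a s')
/-- One υ-rewriting step on substitutions, closed under contexts. -/
inductive SStep : Subst → Subst → Prop
  | slashCong {a a' : Tm} : TStep a a' → SStep (.slash a) (.slash a')
  | liftCong {s s' : Subst} : SStep s s' → SStep (.lift s) (.lift s')
end

/-- A λυ-term is in strict substitution form if it is reachable from some a[b/],
with a and b pure, by υ-steps only (no Beta). -/
def StrictForm (t : Tm) : Prop :=
  ∃ a b : Tm, Tm.impure a = false ∧ Tm.impure b = false ∧
    Relation.ReflTransGen TStep (Tm.clos a (Subst.slash b)) t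

/-- Number of strict substitution forms of size n. -/
noncomputable def strictCount (n : ℕ) : ℕ :=
  Nat.card {t : Tm // Tm.size t = n ∧ StrictForm t}


mutual
/-- Terms all of whose slash contents are pure. -/
def goodT : Tm → Prop
  | .idx _ => True
  | .lam a => goodT a
  | .app a b => goodT a ∧ goodT b
  | .clos a s => goodT a ∧ goodS s
def goodS : Subst → Prop
  | .slash b => Tm.impure b = false
  | .lift s => goodS s
  | .shift => True
end

theorem pure_good : (t : Tm) → Tm.impure t = false → goodT t
  | .idx _, _ => by simp [goodT]
  | .lam a, h => by
      simp only [Tm.impure] at h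
      simpa [goodT] using pure_good a h
  | .app a b, h => by
      simp only [Tm.impure, Bool.or_eq_false_iff] at h
      exact by simpa [goodT] using ⟨pure_good a h.1, pure_good b h.2⟩
  | .clos _ _, h => by simp [Tm.impure] at h

theorem step_impure {t t' : Tm} (h : TStep t t') : Tm.impure t = true := by
  refine TStep.rec (motive_1 := fun t _ _ => Tm.impure t = true)
    (motive_2 := fun _ _ _ => True) ?_ ?_ ?_ ?_ ?_ ?_ ?_ ?_ ?_ ?_ ?_ ?_ ?_ ?_ h <;>
    simp +contextual [Tm.impure]

theorem step_good {t t' : Tm} (h : TStep t t') : goodT t → goodT t' := by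
  refine TStep.rec (motive_1 := fun t t' _ => goodT t → goodT t')
    (motive_2 := fun s s' _ => goodS s → goodS s') ?_ ?_ ?_ ?_ ?_ ?_ ?_ ?_ ?_ ?_ ?_ ?_ ?_ ?_ h
  case refine_13 =>
    intro a a' hs _ hg
    simp [goodS, step_impure hs] at hg
  case refine_3 =>
    intro a hg
    simp only [goodT, goodS] at hg
    exact pure_good _ hg.2
  all_goals simp +contextual [goodT, goodS]

theorem strict_good {t : Tm} (h : StrictForm t) : goodT t := by
  obtain ⟨a, b, ha, hb, hr⟩ := h
  induction hr with
  | refl => simpa [goodT, goodS] using ⟨pure_good a ha, hb⟩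
  | tail _ hs ih => exact step_good hs ih

open Classical in
noncomputable def PF : ℕ → Finset Tm
  | 0 => ∅
  | n + 1 => (range (n + 1)).image Tm.idx ∪ (PF n).image Tm.lam ∪
      (PF n ×ˢ PF n).image (fun p => Tm.app p.1 p.2)

open Classical in
noncomputable def SF : ℕ → Finset Subst
  | 0 => ∅
  | n + 1 => {Subst.shift} ∪ (SF n).image Subst.lift ∪ (PF n).image Subst.slash

open Classical in
noncomputable def AF : ℕ → Finset Tm
  | 0 => ∅
  | n + 1 => (range (n + 1)).image Tm.idx ∪ (AF n).image Tm.lam ∪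
      (AF n ×ˢ AF n).image (fun p => Tm.app p.1 p.2) ∪
      (AF n ×ˢ SF n).image (fun p => Tm.clos p.1 p.2)

theorem mem_PF (n : ℕ) : ∀ t : Tm, Tm.size t ≤ n → Tm.impure t = false → t ∈ PF n := by
  induction n with
  | zero => intro t h; cases t <;> simp [Tm.size] at h
  | succ n ih =>
    intro t h hp
    cases t with
    | idx k => simp [Tm.size] at h; simp [PF]; omega
    | lam a => simp [Tm.size] at h; simp [Tm.impure] at hp; simp [PF]; exact ih a h hp
    | app a b =>
      simp [Tm.size] at h; simp [Tm.impure] at hp; simp [PF]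
      exact ⟨ih a (by omega) hp.1, ih b (by omega) hp.2⟩
    | clos a s => simp [Tm.impure] at hp

theorem mem_SF (n : ℕ) : ∀ t : Subst, Subst.size t ≤ n → goodS t → t ∈ SF n := by
  induction n with
  | zero => intro t h; cases t <;> simp [Subst.size] at h
  | succ n ih =>
    intro t h hp
    cases t with
    | slash a => simp [Subst.size] at h; simp [goodS] at hp; simp [SF]; exact mem_PF n a h hp
    | lift s => simp [Subst.size] at h; simp [goodS] at hp; simp [SF]; exact ih s h hp
    | shift => simp [SF]

theorem mem_AF (n : ℕ) : ∀ t : Tm, Tm.size t ≤ n → goodT t → t ∈ AF n := by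
  induction n with
  | zero => intro t h; cases t <;> simp [Tm.size] at h
  | succ n ih =>
    intro t h hp
    cases t with
    | idx k => simp [Tm.size] at h; simp [AF]; omega
    | lam a => simp [Tm.size] at h; simp [goodT] at hp; simp [AF]; exact ih a h hp
    | app a b =>
      simp [Tm.size] at h; simp [goodT] at hp; simp [AF]
      exact ⟨ih a (by omega) hp.1, ih b (by omega) hp.2⟩
    | clos a s =>
      simp [Tm.size] at h; simp [goodT] at hp; simp [AF]
      exact ⟨ih a (by omega) hp.1, mem_SF n s (by omega) hp.2⟩

noncomputable def wT (t : Tm) : ℝ := (51 / 200 : ℝ) ^ Tm.size t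
noncomputable def wS (s : Subst) : ℝ := (51 / 200 : ℝ) ^ Subst.size s

theorem wT_nonneg (t : Tm) : 0 ≤ wT t := by unfold wT; positivity
theorem wS_nonneg (t : Subst) : 0 ≤ wS t := by unfold wS; positivity

theorem sum_union_le' {α : Type} [DecidableEq α] (s t : Finset α) (w : α → ℝ)
    (hw : ∀ a, 0 ≤ w a) : ∑ a ∈ s ∪ t, w a ≤ ∑ a ∈ s, w a + ∑ a ∈ t, w a := by
  rw [← Finset.sum_union_inter]
  exact le_add_of_nonneg_right (Finset.sum_nonneg fun a _ => hw a)

theorem sum_idx (n : ℕ) : ∑ k ∈ range n, wT (Tm.idx k) ≤ 51 / 149 := by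
  have : ∀ n : ℕ, ∑ k ∈ range n, wT (Tm.idx k) = 51 / 149 * (1 - (51 / 200 : ℝ) ^ n) := by
    intro n
    induction n with
    | zero => simp
    | succ n ih => rw [Finset.sum_range_succ, ih]; simp only [wT, Tm.size]; ring
  rw [this]
  have : (0 : ℝ) ≤ (51 / 200 : ℝ) ^ n := by positivity
  linarith

theorem PF_bound (n : ℕ) : ∑ t ∈ PF n, wT t ≤ 6 / 10 := by
  classical
  induction n with
  | zero => simp [PF]; norm_num
  | succ n ih =>
    have h0 : 0 ≤ ∑ t ∈ PF n, wT t := Finset.sum_nonneg fun a _ => wT_nonneg a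
    have h1 : ∑ t ∈ (range (n + 1)).image Tm.idx, wT t ≤ 51 / 149 := by
      rw [Finset.sum_image (by intro a _ b _ h; simpa using h)]
      exact sum_idx _
    have h2 : ∑ t ∈ (PF n).image Tm.lam, wT t = 51 / 200 * ∑ t ∈ PF n, wT t := by
      rw [Finset.sum_image (by intro a _ b _ h; simpa using h), Finset.mul_sum]
      refine Finset.sum_congr rfl fun a _ => ?_
      simp only [wT, Tm.size]; ring
    have h3 : ∑ t ∈ (PF n ×ˢ PF n).image (fun p => Tm.app p.1 p.2), wT t
        = 51 / 200 * ((∑ t ∈ PF n, wT t) * ∑ t ∈ PF n, wT t) := by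
      rw [Finset.sum_image (by rintro ⟨a, b⟩ _ ⟨c, d⟩ _ h; simpa using h), Finset.sum_mul_sum,
        ← Finset.sum_product', Finset.mul_sum]
      refine Finset.sum_congr rfl fun a _ => ?_
      simp only [wT, Tm.size]; ring
    have := sum_union_le' ((range (n + 1)).image Tm.idx ∪ (PF n).image Tm.lam)
      ((PF n ×ˢ PF n).image (fun p => Tm.app p.1 p.2)) wT wT_nonneg
    have := sum_union_le' ((range (n + 1)).image Tm.idx) ((PF n).image Tm.lam) wT wT_nonneg
    have h4 : (∑ t ∈ PF n, wT t) * ∑ t ∈ PF n, wT t ≤ 6 / 10 * (6 / 10) := by gcongr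
    have h5 : ∑ t ∈ PF (n + 1), wT t = ∑ t ∈ (range (n + 1)).image Tm.idx ∪ (PF n).image Tm.lam ∪
      (PF n ×ˢ PF n).image (fun p => Tm.app p.1 p.2), wT t := by
      refine Finset.sum_congr ?_ fun _ _ => rfl
      ext; simp [PF]
    linarith

theorem SF_bound (n : ℕ) : ∑ t ∈ SF n, wS t ≤ 55 / 100 := by
  classical
  induction n with
  | zero => simp [SF]; norm_num
  | succ n ih =>
    have hP := PF_bound n
    have h1 : ∑ t ∈ ({Subst.shift} : Finset Subst), wS t = 51 / 200 := by
      simp [wS, Subst.size]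
    have h2 : ∑ t ∈ (SF n).image Subst.lift, wS t = 51 / 200 * ∑ t ∈ SF n, wS t := by
      rw [Finset.sum_image (by intro a _ b _ h; simpa using h), Finset.mul_sum]
      refine Finset.sum_congr rfl fun a _ => ?_
      simp only [wS, Subst.size]; ring
    have h3 : ∑ t ∈ (PF n).image Subst.slash, wS t = 51 / 200 * ∑ t ∈ PF n, wT t := by
      rw [Finset.sum_image (by intro a _ b _ h; simpa using h), Finset.mul_sum]
      refine Finset.sum_congr rfl fun a _ => ?_
      simp only [wS, wT, Subst.size]; ring
    have := sum_union_le' ({Subst.shift} ∪ (SF n).image Subst.lift)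
      ((PF n).image Subst.slash) wS wS_nonneg
    have := sum_union_le' {Subst.shift} ((SF n).image Subst.lift) wS wS_nonneg
    have h5 : ∑ t ∈ SF (n + 1), wS t = ∑ t ∈ {Subst.shift} ∪ (SF n).image Subst.lift ∪
      (PF n).image Subst.slash, wS t := by
      refine Finset.sum_congr ?_ fun _ _ => rfl
      ext; simp [SF]
    linarith

theorem AF_bound (n : ℕ) : ∑ t ∈ AF n, wT t ≤ 118 / 100 := by
  classical
  induction n with
  | zero => simp [AF]; norm_num
  | succ n ih =>
    have hS := SF_bound n
    have h0 : 0 ≤ ∑ t ∈ AF n, wT t := Finset.sum_nonneg fun a _ => wT_nonneg a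
    have h0' : 0 ≤ ∑ t ∈ SF n, wS t := Finset.sum_nonneg fun a _ => wS_nonneg a
    have h1 : ∑ t ∈ (range (n + 1)).image Tm.idx, wT t ≤ 51 / 149 := by
      rw [Finset.sum_image (by intro a _ b _ h; simpa using h)]
      exact sum_idx _
    have h2 : ∑ t ∈ (AF n).image Tm.lam, wT t = 51 / 200 * ∑ t ∈ AF n, wT t := by
      rw [Finset.sum_image (by intro a _ b _ h; simpa using h), Finset.mul_sum]
      refine Finset.sum_congr rfl fun a _ => ?_
      simp only [wT, Tm.size]; ring
    have h3 : ∑ t ∈ (AF n ×ˢ AF n).image (fun p => Tm.app p.1 p.2), wT t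
        = 51 / 200 * ((∑ t ∈ AF n, wT t) * ∑ t ∈ AF n, wT t) := by
      rw [Finset.sum_image (by rintro ⟨a, b⟩ _ ⟨c, d⟩ _ h; simpa using h), Finset.sum_mul_sum,
        ← Finset.sum_product', Finset.mul_sum]
      refine Finset.sum_congr rfl fun a _ => ?_
      simp only [wT, Tm.size]; ring
    have h6 : ∑ t ∈ (AF n ×ˢ SF n).image (fun p => Tm.clos p.1 p.2), wT t
        = 51 / 200 * ((∑ t ∈ AF n, wT t) * ∑ t ∈ SF n, wS t) := by
      rw [Finset.sum_image (by rintro ⟨a, b⟩ _ ⟨c, d⟩ _ h; simpa using h), Finset.sum_mul_sum,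
        ← Finset.sum_product', Finset.mul_sum]
      refine Finset.sum_congr rfl fun a _ => ?_
      simp only [wT, wS, Tm.size]; ring
    have := sum_union_le' ((range (n + 1)).image Tm.idx ∪ (AF n).image Tm.lam ∪
      (AF n ×ˢ AF n).image (fun p => Tm.app p.1 p.2))
      ((AF n ×ˢ SF n).image (fun p => Tm.clos p.1 p.2)) wT wT_nonneg
    have := sum_union_le' ((range (n + 1)).image Tm.idx ∪ (AF n).image Tm.lam)
      ((AF n ×ˢ AF n).image (fun p => Tm.app p.1 p.2)) wT wT_nonneg
    have := sum_union_le' ((range (n + 1)).image Tm.idx) ((AF n).image Tm.lam) wT wT_nonneg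
    have h4 : (∑ t ∈ AF n, wT t) * ∑ t ∈ AF n, wT t ≤ 118 / 100 * (118 / 100) := by gcongr
    have h7 : (∑ t ∈ AF n, wT t) * ∑ t ∈ SF n, wS t ≤ 118 / 100 * (55 / 100) := by gcongr
    have h5 : ∑ t ∈ AF (n + 1), wT t = ∑ t ∈ (range (n + 1)).image Tm.idx ∪ (AF n).image Tm.lam ∪
      (AF n ×ˢ AF n).image (fun p => Tm.app p.1 p.2) ∪
      (AF n ×ˢ SF n).image (fun p => Tm.clos p.1 p.2), wT t := by
      refine Finset.sum_congr ?_ fun _ _ => rfl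
      ext; simp [AF]
    linarith

theorem strict_bound (n : ℕ) : (strictCount n : ℝ) * (51 / 200 : ℝ) ^ n ≤ 118 / 100 := by
  classical
  have h1 : strictCount n ≤ ((AF n).filter fun t => Tm.size t = n).card := by
    unfold strictCount
    rw [← Fintype.card_coe, ← Nat.card_eq_fintype_card]
    exact Nat.card_le_card_of_injective
      (fun x : {t : Tm // Tm.size t = n ∧ StrictForm t} =>
        (⟨x.1, Finset.mem_filter.2 ⟨mem_AF n x.1 x.2.1.le (strict_good x.2.2), x.2.1⟩⟩ :
          ((AF n).filter fun t => Tm.size t = n : Finset Tm)))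
      (by intro x y h; simpa [Subtype.ext_iff] using h)
  have h2 : ∑ t ∈ (AF n).filter (fun t => Tm.size t = n), wT t
      = (((AF n).filter fun t => Tm.size t = n).card : ℝ) * (51 / 200 : ℝ) ^ n := by
    rw [Finset.sum_congr rfl (g := fun _ => (51 / 200 : ℝ) ^ n), Finset.sum_const, nsmul_eq_mul]
    intro t ht
    rw [wT, (Finset.mem_filter.1 ht).2]
  have h3 := Finset.sum_le_sum_of_subset_of_nonneg
    (Finset.filter_subset (fun t => Tm.size t = n) (AF n)) (f := wT) fun i _ _ => wT_nonneg i
  have h4 := AF_bound n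
  calc (strictCount n : ℝ) * (51 / 200 : ℝ) ^ n
      ≤ (((AF n).filter fun t => Tm.size t = n).card : ℝ) * (51 / 200 : ℝ) ^ n := by gcongr
    _ ≤ _ := by linarith

theorem finite_le (n : ℕ) :
    {t : Tm | Tm.size t ≤ n}.Finite ∧ {s : Subst | Subst.size s ≤ n}.Finite := by
  induction n with
  | zero =>
    constructor
    · convert Set.finite_empty; ext t; cases t <;> simp [Tm.size]
    · convert Set.finite_empty; ext t; cases t <;> simp [Subst.size]
  | succ n ih =>
    obtain ⟨hT, hS⟩ := ih
    constructor
    · refine ((((Set.finite_Iic n).image Tm.idx).union (hT.image Tm.lam)).union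
        (((hT.prod hT).image fun p => Tm.app p.1 p.2).union
         ((hT.prod hS).image fun p => Tm.clos p.1 p.2))).subset ?_
      intro t ht
      cases t <;> simp [Tm.size] at ht ⊢ <;> omega
    · refine (((Set.finite_singleton Subst.shift).union (hS.image Subst.lift)).union
        (hT.image Subst.slash)).subset ?_
      intro t ht
      cases t <;> simp [Subst.size] at ht ⊢ <;> omega

/-- The size-raising map onto the terms that are neither `idx 0`, `lam` nor `app`. -/
def bump : Tm → Tm
  | .idx n => .idx (n + 1)
  | .lam a => .clos a .shift
  | .app a b => .clos a (.slash b)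
  | .clos a s => .clos a (.lift s)

theorem bump_size (t : Tm) : Tm.size (bump t) = Tm.size t + 1 := by
  cases t <;> simp [bump, Tm.size, Subst.size] <;> omega

theorem bump_inj {t u : Tm} (h : bump t = bump u) : t = u := by
  cases t <;> cases u <;> simp_all [bump]

/-- Binary trees as λυ-terms. -/
def toTm : BinaryTree Unit → Tm
  | .nil => .idx 0
  | .node _ .nil .nil => .idx 0
  | .node _ (.node _ a b) .nil => .lam (toTm (.node () a b))
  | .node _ .nil (.node _ a b) => bump (toTm (.node () a b))
  | .node _ (.node _ a b) (.node _ c d) => .app (toTm (.node () a b)) (toTm (.node () c d))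

theorem toTm_size : (t : BinaryTree Unit) → t ≠ .nil → Tm.size (toTm t) = t.numNodes
  | .nil, h => absurd rfl h
  | .node _ .nil .nil, _ => by simp [toTm, Tm.size]
  | .node _ (.node _ a b) .nil, _ => by
      have := toTm_size (.node () a b) (by simp)
      simp_all [toTm, Tm.size]
  | .node _ .nil (.node _ a b), _ => by
      have := toTm_size (.node () a b) (by simp)
      simp_all [toTm, bump_size]
  | .node _ (.node _ a b) (.node _ c d), _ => by
      have := toTm_size (.node () a b) (by simp)
      have := toTm_size (.node () c d) (by simp)
      simp_all [toTm, Tm.size]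

theorem bump_ne_zero (t : Tm) : bump t ≠ .idx 0 := by cases t <;> simp [bump]
theorem bump_ne_lam (t a : Tm) : bump t ≠ .lam a := by cases t <;> simp [bump]
theorem bump_ne_app (t a b : Tm) : bump t ≠ .app a b := by cases t <;> simp [bump]

theorem toTm_inj : (t u : BinaryTree Unit) → t ≠ .nil → u ≠ .nil → toTm t = toTm u → t = u
  | .nil, _, h, _, _ => absurd rfl h
  | _, .nil, _, h, _ => absurd rfl h
  | .node _ .nil .nil, .node _ .nil .nil, _, _, _ => rfl
  | .node _ .nil .nil, .node _ (.node _ a b) .nil, _, _, h => by simp [toTm] at h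
  | .node _ .nil .nil, .node _ .nil (.node _ a b), _, _, h => by
      simp only [toTm] at h; exact absurd h.symm (bump_ne_zero _)
  | .node _ .nil .nil, .node _ (.node _ a b) (.node _ c d), _, _, h => by simp [toTm] at h
  | .node _ (.node _ a b) .nil, .node _ .nil .nil, _, _, h => by simp [toTm] at h
  | .node _ (.node _ a b) .nil, .node _ (.node _ a' b') .nil, _, _, h => by
      simp only [toTm, Tm.lam.injEq] at h
      have := toTm_inj (.node () a b) (.node () a' b') (by simp) (by simp) h
      simp_all
  | .node _ (.node _ a b) .nil, .node _ .nil (.node _ a' b'), _, _, h => by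
      simp only [toTm] at h; exact absurd h.symm (bump_ne_lam _ _)
  | .node _ (.node _ a b) .nil, .node _ (.node _ a' b') (.node _ c d), _, _, h => by
      simp [toTm] at h
  | .node _ .nil (.node _ a b), .node _ .nil .nil, _, _, h => by
      simp only [toTm] at h; exact absurd h (bump_ne_zero _)
  | .node _ .nil (.node _ a b), .node _ (.node _ a' b') .nil, _, _, h => by
      simp only [toTm] at h; exact absurd h (bump_ne_lam _ _)
  | .node _ .nil (.node _ a b), .node _ .nil (.node _ a' b'), _, _, h => by
      simp only [toTm] at h
      have := toTm_inj (.node () a b) (.node () a' b') (by simp) (by simp) (bump_inj h)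
      simp_all
  | .node _ .nil (.node _ a b), .node _ (.node _ a' b') (.node _ c d), _, _, h => by
      simp only [toTm] at h; exact absurd h (bump_ne_app _ _ _)
  | .node _ (.node _ a b) (.node _ c d), .node _ .nil .nil, _, _, h => by simp [toTm] at h
  | .node _ (.node _ a b) (.node _ c d), .node _ (.node _ a' b') .nil, _, _, h => by
      simp [toTm] at h
  | .node _ (.node _ a b) (.node _ c d), .node _ .nil (.node _ a' b'), _, _, h => by
      simp only [toTm] at h; exact absurd h.symm (bump_ne_app _ _ _)
  | .node _ (.node _ a b) (.node _ c d), .node _ (.node _ a' b') (.node _ c' d'), _, _, h => by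
      simp only [toTm, Tm.app.injEq] at h
      have := toTm_inj (.node () a b) (.node () a' b') (by simp) (by simp) h.1
      have := toTm_inj (.node () c d) (.node () c' d') (by simp) (by simp) h.2
      simp_all

theorem catalan_le_tcount (n : ℕ) (hn : 0 < n) : catalan n ≤ tcount n := by
  have hfin : Finite {a : Tm // Tm.size a = n} :=
    ((finite_le n).1.subset (fun t (ht : Tm.size t = n) => ht.le)).to_subtype
  have hne : ∀ t ∈ BinaryTree.treesOfNumNodesEq n, t ≠ .nil := by
    rintro t ht rfl
    rw [BinaryTree.mem_treesOfNumNodesEq] at ht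
    simp at ht; omega
  unfold tcount
  rw [← BinaryTree.treesOfNumNodesEq_card_eq_catalan, ← Fintype.card_coe, ← Nat.card_eq_fintype_card]
  refine Nat.card_le_card_of_injective
    (fun x : BinaryTree.treesOfNumNodesEq n =>
      (⟨toTm x.1, by
        rw [toTm_size _ (hne _ x.2)]
        exact BinaryTree.mem_treesOfNumNodesEq.1 x.2⟩ : {a : Tm // Tm.size a = n})) ?_
  intro x y h
  exact Subtype.ext (toTm_inj _ _ (hne _ x.2) (hne _ y.2) (congrArg Subtype.val h))

theorem tcount_lower (n : ℕ) (hn : 4 ≤ n) : (4 : ℝ) ^ n ≤ 2 * (n : ℝ) ^ 2 * tcount n := by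
  have h1 := (Nat.four_pow_lt_mul_centralBinom n hn).le
  rw [← succ_mul_catalan_eq_centralBinom] at h1
  have h2 := catalan_le_tcount n (by omega)
  have h3 : 4 ^ n ≤ 2 * n ^ 2 * tcount n := by
    calc 4 ^ n ≤ n * ((n + 1) * catalan n) := h1
      _ ≤ n * ((n + n) * tcount n) := by gcongr; omega
      _ = _ := by ring
  exact_mod_cast h3

/-- asymptotically almost all λυ-terms are in lazy substitution form. -/
theorem stmt11 :
    Tendsto (fun n : ℕ => (strictCount n : ℝ) / (tcount n : ℝ)) atTop (nhds 0) := by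
  have hlim := (tendsto_pow_const_mul_const_pow_of_lt_one 2 (r := (50 / 51 : ℝ))
    (by norm_num) (by norm_num)).const_mul (236 / 100 : ℝ)
  rw [mul_zero] at hlim
  refine squeeze_zero' (Eventually.of_forall fun n => by positivity) ?_ hlim
  filter_upwards [eventually_ge_atTop 4] with n hn
  have hl := tcount_lower n hn
  have hs := strict_bound n
  have h4 : (0 : ℝ) < 4 ^ n := by positivity
  have ht : (0 : ℝ) < tcount n := by
    by_contra hcon
    have h0 : (tcount n : ℝ) = 0 := le_antisymm (not_lt.1 hcon) (by positivity)
    rw [h0] at hl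
    linarith
  have hz : (0 : ℝ) < (51 / 200 : ℝ) ^ n := by positivity
  rw [div_le_iff₀ ht]
  have hr : (50 / 51 : ℝ) ^ n * (51 / 200 : ℝ) ^ n * 4 ^ n = 1 := by
    rw [← mul_pow, ← mul_pow]; norm_num
  have hq : (0 : ℝ) < (50 / 51 : ℝ) ^ n := by positivity
  calc (strictCount n : ℝ)
      = ((strictCount n : ℝ) * (51 / 200 : ℝ) ^ n) * ((50 / 51 : ℝ) ^ n * 4 ^ n) := by
        linear_combination -(strictCount n : ℝ) * hr
    _ ≤ 118 / 100 * ((50 / 51 : ℝ) ^ n * (2 * (n : ℝ) ^ 2 * tcount n)) := by gcongr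
    _ = _ := by ring
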